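/- Let μ ∈ (0,1] and let X ⊆ ℝ^d be a complementary regular set with reach_μ(X) > 0. Then for every x ∈ ∂X there exists a unit vector u ∈ ℝ^d such that the closed ball of radius μ centered at u is contained in Tan(X̄ᶜ, x). -/

import Mathlib

open Metric Set Filter Topology RealInnerProductSpace

noncomputable section

/-- Euclidean space ℝ^d. -/
abbrev Euc (d : ℕ) := EuclideanSpace ℝ (Fin d)

variable {d : ℕ}

/-- The Clarke gradient of a (locally Lipschitz) function `φ` at `x`: the convex hull of
all limits of gradients `∇φ(xᵢ)` along sequences `xᵢ → x` of points of differentiability. -/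
def clarkeGradient (φ : Euc d → ℝ) (x : Euc d) : Set (Euc d) :=
  convexHull ℝ {v | ∃ u : ℕ → Euc d,
    Tendsto u atTop (𝓝 x) ∧ (∀ i, DifferentiableAt ℝ φ (u i)) ∧
    Tendsto (fun i => gradient φ (u i)) atTop (𝓝 v)}

/-- `Δ(S)`: the distance from the origin to the set `S`. -/
def Delta (S : Set (Euc d)) : ℝ := infDist 0 S

/-- The polar (dual) cone of a set `B`. -/
def polarCone (B : Set (Euc d)) : Set (Euc d) :=
  {u | ∀ b ∈ B, ⟪u, b⟫ ≤ (0:ℝ)}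

/-- A set has positive reach: there is `t > 0` such that every point at distance `< t`
from `A` has a unique nearest point in `A`. -/
def HasPositiveReach (A : Set (Euc d)) : Prop :=
  ∃ t > (0:ℝ), ∀ x : Euc d, infDist x A < t →
    ∃! y : Euc d, y ∈ A ∧ dist x y = infDist x A

/-- The "complement set" `X̄ᶜ := closure (ℝ^d ∖ X)`. -/
def compSet (X : Set (Euc d)) : Set (Euc d) := closure Xᶜ

/-- `reach_μ(X) > 0`: there is `s > 0` with `Δ(∂d_X(x)) ≥ μ` whenever `0 < d_X(x) ≤ s`. -/
def MuReachPos (μ : ℝ) (X : Set (Euc d)) : Prop :=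
  ∃ s > (0:ℝ), ∀ x : Euc d, 0 < infDist x X → infDist x X ≤ s →
    μ ≤ Delta (clarkeGradient (fun y => infDist y X) x)

/-- Complementary regular set. -/
def ComplementaryRegular (X : Set (Euc d)) : Prop :=
  X.Nonempty ∧ IsCompact X ∧ closure (interior X) = X ∧
  (∃ μ : ℝ, 0 < μ ∧ μ ≤ 1 ∧ MuReachPos μ X) ∧ HasPositiveReach (compSet X)

/-- Critical point of `f` restricted to a complementary regular set `X`. -/
def IsCriticalPoint (X : Set (Euc d)) (f : Euc d → ℝ) (x : Euc d) : Prop :=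
  x ∈ X ∧ ((x ∈ interior X ∧ gradient f x = 0) ∨
    (x ∈ frontier X ∧ gradient f x ∈ polarCone (tangentConeAt ℝ (compSet X) x)))

/-- Regular value of `f|X`. -/
def IsRegularValue (X : Set (Euc d)) (f : Euc d → ℝ) (c : ℝ) : Prop :=
  ∀ x, IsCriticalPoint X f x → f x ≠ c

/-- `A` is a strong deformation retract of `B`. -/
def IsStrongDefRetract (A B : Set (Euc d)) : Prop :=
  ∃ H : ℝ → Euc d → Euc d,
    ContinuousOn (fun p : ℝ × Euc d => H p.1 p.2) (Icc (0:ℝ) 1 ×ˢ B) ∧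
    (∀ t ∈ Icc (0:ℝ) 1, ∀ b ∈ B, H t b ∈ B) ∧
    (∀ b ∈ B, H 0 b = b) ∧ (∀ b ∈ B, H 1 b ∈ A) ∧
    (∀ t ∈ Icc (0:ℝ) 1, ∀ a ∈ A, H t a = a)

/-- The counter-offset `X^{-r} = {x | d_{X̄ᶜ}(x) ≥ r}` for `r > 0`, with `X^{-0} := X`. -/
def counterOffset (X : Set (Euc d)) (r : ℝ) : Set (Euc d) :=
  if r = 0 then X else {x | r ≤ infDist x (compSet X)}

/-- The unit normal bundle of a complementary regular set, with
`Nor(X,x) := -(Tan(X̄ᶜ,x))°`. -/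
def normalBundle (X : Set (Euc d)) : Set (Euc d × Euc d) :=
  {p | p.1 ∈ frontier X ∧ ‖p.2‖ = 1 ∧ -p.2 ∈ polarCone (tangentConeAt ℝ (compSet X) p.1)}

/-- A pair `(x,n)` of the unit normal bundle is regular if the tangent cone of `Nor(X)`
at `(x,n)` is a linear subspace of dimension `d - 1`. -/
def IsRegularPair (X : Set (Euc d)) (x n : Euc d) : Prop :=
  (x, n) ∈ normalBundle X ∧ ∃ T : Submodule ℝ (Euc d × Euc d),
    (T : Set (Euc d × Euc d)) = tangentConeAt ℝ (normalBundle X) (x, n) ∧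
    Module.finrank ℝ T = d - 1

/-- A non-degenerate critical point of `f|X`: `∇f(x) ≠ 0`, the pair
`(x, -∇f(x)/‖∇f(x)‖)` is regular, and the restricted Hessian
`H_x f(u,·) + ‖∇f(x)‖·⟪u,·⟫` is non-degenerate on `π₀(Tan(Nor(X),(x,n)))`. -/
def NonDegenerateCriticalPoint (X : Set (Euc d)) (f : Euc d → ℝ) (x : Euc d) : Prop :=
  IsCriticalPoint X f x ∧ gradient f x ≠ 0 ∧
  IsRegularPair X x (-(‖gradient f x‖⁻¹ • gradient f x)) ∧
  ∀ u : Euc d, u ≠ 0 →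
    (∃ v, (u, v) ∈ tangentConeAt ℝ (normalBundle X) (x, -(‖gradient f x‖⁻¹ • gradient f x))) →
    ∃ u' v', (u', v') ∈ tangentConeAt ℝ (normalBundle X)
        (x, -(‖gradient f x‖⁻¹ • gradient f x)) ∧
      ⟪(fderiv ℝ (gradient f) x) u, u'⟫ + ‖gradient f x‖ * ⟪u, v'⟫ ≠ 0

/-!
If `z` is a nearest point of `X` to `y ∉ X`, then `d_X` is squeezed near a point `p` of the open
segment `]z, y[` between `‖· - z‖` and `d_X y - ‖· - y‖`, so its gradient at `p` is the unit vector
from `z` to `y`. Letting `p → y`, all these unit vectors lie in the Clarke gradient at `y`. The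
element `w` of minimal norm of the closed Clarke gradient has `‖w‖ ≥ μ`, and in the direction of `w`
the function `d_X` increases at every rate `m < μ`. Climbing from a boundary point `x` therefore
reaches the level `d_X = ρ` at a point `y` with `μ ‖y - x‖ ≤ ρ`. Hence the closed ball of radius
`μ ‖y - x‖` around `y` lies in the closure of the complement. As `ρ → 0`, the directions
`(y - x) / ‖y - x‖` accumulate at a unit vector `u`, and the balls, seen from `x` at scale
`‖y - x‖`, fill `closedBall u μ`.
-/

section DistanceGradient

variable {F : Type*} [NormedAddCommGroup F] [InnerProductSpace ℝ F] [CompleteSpace F]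

lemma hasGradientAt_of_eventuallyLE {f g h : F → ℝ} {v p : F} (hg : HasGradientAt g v p)
    (hh : HasGradientAt h v p) (hgf : g ≤ᶠ[𝓝 p] f) (hfh : f ≤ᶠ[𝓝 p] h) (hgh : g p = h p) :
    HasGradientAt f v p := by
  have hgp : g p = f p := hgf.self_of_nhds.antisymm (hgh ▸ hfh.self_of_nhds)
  have hhp : h p = f p := hgh ▸ hgp
  rw [hasGradientAt_iff_isLittleO] at hg hh ⊢
  rw [hgp] at hg
  rw [hhp] at hh
  refine Asymptotics.IsBigO.trans_isLittleO (.of_bound' ?_) (hg.norm_left.add hh.norm_left)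
  filter_upwards [hgf, hfh] with q hgq hfq
  calc |f q - f p - ⟪v, q - p⟫|
      ≤ max |g q - f p - ⟪v, q - p⟫| |h q - f p - ⟪v, q - p⟫| :=
        abs_le_max_abs_abs (by gcongr) (by gcongr)
    _ ≤ |g q - f p - ⟪v, q - p⟫| + |h q - f p - ⟪v, q - p⟫| :=
        max_le_add_of_nonneg (abs_nonneg _) (abs_nonneg _)
    _ ≤ _ := Real.le_norm_self _

lemma hasGradientAt_dist_left {p z : F} (hpz : p ≠ z) :
    HasGradientAt (fun q => dist q z) (NormedSpace.normalize (p - z)) p := by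
  have hsub : ‖p - z‖ ^ 2 ≠ 0 := by simpa using sub_ne_zero.2 hpz
  have hsqrt := ((hasFDerivAt_id p).sub_const z).norm_sq.sqrt hsub
  simp only [id_eq, Real.sqrt_sq (norm_nonneg _)] at hsqrt
  rw [hasGradientAt_iff_hasFDerivAt]
  simp only [dist_eq_norm]
  convert! hsqrt using 1
  ext w
  simp only [NormedSpace.normalize, map_smul, map_sub, smul_apply, sub_apply,
    InnerProductSpace.toDual_apply_apply, smul_eq_mul, one_div, mul_inv_rev,
    ContinuousLinearMap.comp_id, coe_innerSL_apply, nsmul_eq_mul, Nat.cast_ofNat]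
  field_simp

lemma hasGradientAt_infDist_lineMap {X : Set F} {y z : F} (hz : z ∈ X) (hyz : y ≠ z)
    (hdist : dist y z = infDist y X) {t : ℝ} (ht : t ∈ Ioo 0 1) :
    HasGradientAt (fun q => infDist q X) (NormedSpace.normalize (y - z))
      (AffineMap.lineMap z y t) := by
  set p : F := AffineMap.lineMap z y t
  have hpz : p - z = t • (y - z) := AffineMap.lineMap_vsub_left z y t
  have hpy : p - y = (1 - t) • (z - y) := AffineMap.lineMap_vsub_right z y t
  have ht' : 0 < 1 - t := sub_pos.2 ht.2
  have hupper : HasGradientAt (fun q => dist q z) (NormedSpace.normalize (y - z)) p := by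
    rw [← NormedSpace.normalize_smul_of_pos ht.1, ← hpz]
    refine hasGradientAt_dist_left (sub_ne_zero.1 ?_)
    simpa [hpz, sub_eq_zero, ht.1.ne'] using hyz
  have hlower :
      HasGradientAt (fun q => infDist y X - dist q y) (NormedSpace.normalize (y - z)) p := by
    rw [← neg_sub, NormedSpace.normalize_neg, ← NormedSpace.normalize_smul_of_pos ht', ← hpy,
      hasGradientAt_iff_hasFDerivAt, map_neg]
    refine (hasGradientAt_dist_left (sub_ne_zero.1 ?_)).hasFDerivAt.const_sub _
    simpa [hpy, sub_eq_zero, ht'.ne'] using hyz.symm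
  refine hasGradientAt_of_eventuallyLE hlower hupper (.of_forall fun q => ?_)
    (.of_forall fun q => infDist_le_dist_of_mem hz) ?_
  · rw [sub_le_iff_le_add, dist_comm]
    exact infDist_le_infDist_add_dist
  · rw [← hdist, dist_eq_norm p, dist_eq_norm p, hpz, hpy, norm_smul, norm_smul,
      Real.norm_of_nonneg ht.1.le, Real.norm_of_nonneg ht'.le, dist_eq_norm, norm_sub_rev z y]
    ring

end DistanceGradient

lemma normalize_sub_mem_clarkeGradient_infDist {X : Set (Euc d)} {y z : Euc d} (hz : z ∈ X)
    (hyz : y ≠ z) (hdist : dist y z = infDist y X) :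
    NormedSpace.normalize (y - z) ∈ clarkeGradient (fun q => infDist q X) y := by
  obtain ⟨t, -, ht, ht_lim⟩ := exists_seq_strictMono_tendsto' (zero_lt_one (α := ℝ))
  have hgrad n := hasGradientAt_infDist_lineMap hz hyz hdist (ht n)
  refine subset_convexHull ℝ _ ⟨fun n => AffineMap.lineMap z y (t n), ?_,
    fun n => (hgrad n).differentiableAt, ?_⟩
  · exact ((AffineMap.lineMap_continuous (R := ℝ)).tendsto' 1 y (by simp)).comp ht_lim
  · simp only [(hgrad _).gradient, tendsto_const_nhds]

lemma eventually_forall_nearest_mem {α : Type*} [PseudoMetricSpace α] [ProperSpace α]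
    {X U : Set α} {y : α} (hX : IsClosed X) (hU : IsOpen U)
    (hyU : ∀ z ∈ X, dist y z = infDist y X → z ∈ U) :
    ∀ᶠ y' in 𝓝 y, ∀ z ∈ X, dist y' z = infDist y' X → z ∈ U := by
  rcases (X \ U).eq_empty_or_nonempty with hempty | hne
  · exact .of_forall fun _ z hz _ => sdiff_eq_empty.1 hempty hz
  have hlt : infDist y X < infDist y (X \ U) := by
    obtain ⟨z, ⟨hzX, hzU⟩, hz⟩ := (hX.sdiff hU).exists_infDist_eq_dist hne y
    rw [hz]
    exact (infDist_le_dist_of_mem hzX).lt_of_ne' fun h => hzU (hyU z hzX h)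
  filter_upwards [(continuous_infDist_pt X).continuousAt.eventually_lt
    (continuous_infDist_pt (X \ U)).continuousAt hlt] with y' hy' z hzX hz
  by_contra hzU
  exact ((infDist_le_dist_of_mem (mem_sdiff_of_mem hzX hzU)).trans_eq hz).not_gt hy'

section DirectionOfAscent

variable {E : Type*} [NormedAddCommGroup E] [InnerProductSpace ℝ E]

lemma exists_norm_eq_one_forall_le_inner [CompleteSpace E] {S : Set E} (hS : Convex ℝ S) {μ : ℝ}
    (hμ : 0 < μ) (hμS : μ ≤ infDist 0 S) :
    ∃ v : E, ‖v‖ = 1 ∧ ∀ g ∈ S, μ ≤ ⟪v, g⟫ := by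
  have hne : S.Nonempty := by
    by_contra! rfl
    simp only [infDist_empty] at hμS
    linarith
  obtain ⟨w, hw, hmin⟩ := exists_norm_eq_iInf_of_complete_convex hne.closure
    isClosed_closure.isComplete hS.closure 0
  rw [norm_eq_iInf_iff_real_inner_le_zero hS.closure hw] at hmin
  have hμw : μ ≤ ‖w‖ := by
    rw [← infDist_closure] at hμS
    simpa using hμS.trans (infDist_le_dist_of_mem hw)
  have hw_pos : 0 < ‖w‖ := hμ.trans_le hμw
  refine ⟨NormedSpace.normalize w, NormedSpace.norm_normalize (norm_pos_iff.1 hw_pos),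
    fun g hg => ?_⟩
  have hwg : ‖w‖ ^ 2 ≤ ⟪w, g⟫ := by
    have hinner := hmin g (subset_closure hg)
    rw [zero_sub, inner_neg_left, inner_sub_right, real_inner_self_eq_norm_sq] at hinner
    linarith
  rw [NormedSpace.normalize, real_inner_smul_left, inv_mul_eq_div, le_div_iff₀ hw_pos]
  nlinarith

lemma norm_add_mul_lt_norm_add_smul {q v : E} {m t : ℝ} (hqv : m * ‖q‖ < ⟪v, q⟫) (ht : 0 < t) :
    ‖q‖ + m * t < ‖q + t • v‖ := by
  have hcs : ‖q‖ ^ 2 + t * ⟪v, q⟫ ≤ ‖q‖ * ‖q + t • v‖ := by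
    simpa [inner_add_right, real_inner_smul_right, real_inner_comm]
      using real_inner_le_norm q (q + t • v)
  refine lt_of_mul_lt_mul_left ?_ (norm_nonneg q)
  calc ‖q‖ * (‖q‖ + m * t) = ‖q‖ ^ 2 + t * (m * ‖q‖) := by ring
    _ < ‖q‖ ^ 2 + t * ⟪v, q⟫ := by gcongr
    _ ≤ ‖q‖ * ‖q + t • v‖ := hcs

lemma frequently_infDist_add_mul_dist_lt [ProperSpace E] {X : Set E} (hX : IsClosed X)
    (hne : X.Nonempty) {y v : E} {m : ℝ} (hv : ‖v‖ = 1)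
    (hyv : ∀ z ∈ X, dist y z = infDist y X → m * ‖y - z‖ < ⟪v, y - z⟫) :
    ∃ᶠ y' in 𝓝 y, infDist y X + m * dist y' y < infDist y' X := by
  have hline : Tendsto (fun t : ℝ => y + t • v) (𝓝[>] 0) (𝓝 y) :=
    tendsto_nhdsWithin_of_tendsto_nhds (Continuous.tendsto' (by fun_prop) _ _ (by simp))
  have hU : IsOpen {z | m * ‖y - z‖ < ⟪v, y - z⟫} := isOpen_lt (by fun_prop) (by fun_prop)
  refine hline.frequently (Eventually.frequently ?_)
  filter_upwards [hline.eventually (eventually_forall_nearest_mem hX hU hyv),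
    self_mem_nhdsWithin] with t hnear ht
  obtain ⟨z, hz, hdist⟩ := hX.exists_infDist_eq_dist hne (y + t • v)
  calc infDist y X + m * dist (y + t • v) y ≤ ‖y - z‖ + m * t := by
        rw [dist_self_add_left, norm_smul, hv, mul_one, Real.norm_of_nonneg (le_of_lt ht),
          ← dist_eq_norm]
        gcongr
        exact infDist_le_dist_of_mem hz
    _ < ‖y - z + t • v‖ := norm_add_mul_lt_norm_add_smul (hnear z hz hdist.symm) ht
    _ = infDist (y + t • v) X := by rw [hdist, dist_eq_norm, sub_add_eq_add_sub]

end DirectionOfAscent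

lemma frequently_infDist_add_mul_dist_lt_of_le_Delta {X : Set (Euc d)} (hX : IsClosed X)
    (hne : X.Nonempty) {y : Euc d} (hy : 0 < infDist y X) {m μ : ℝ} (hμ : 0 < μ) (hm : m < μ)
    (hΔ : μ ≤ Delta (clarkeGradient (fun q => infDist q X) y)) :
    ∃ᶠ y' in 𝓝 y, infDist y X + m * dist y' y < infDist y' X := by
  obtain ⟨v, hv, hvG⟩ := exists_norm_eq_one_forall_le_inner (convex_convexHull ℝ _) hμ hΔ
  refine frequently_infDist_add_mul_dist_lt hX hne hv fun z hz hdist => ?_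
  have hyz : 0 < ‖y - z‖ := by rwa [← dist_eq_norm, hdist]
  have hle := hvG _ (normalize_sub_mem_clarkeGradient_infDist hz
    (sub_ne_zero.1 (norm_pos_iff.1 hyz)) hdist)
  rw [NormedSpace.normalize, real_inner_smul_right, inv_mul_eq_div, le_div_iff₀ hyz] at hle
  exact (mul_lt_mul_of_pos_right hm hyz).trans_le hle

section Ascent

variable {α : Type*} [PseudoMetricSpace α] [ProperSpace α] {f : α → ℝ} {a ρ : ℝ}

lemma exists_eq_and_add_mul_dist_le {m : ℝ} (hf : Continuous f) (hm : 0 < m)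
    (hslope : ∀ y, a < f y → f y < ρ → ∃ᶠ y' in 𝓝 y, f y + m * dist y' y < f y')
    {x : α} (hax : a < f x) (hxρ : f x ≤ ρ) :
    ∃ y, f y = ρ ∧ f x + m * dist y x ≤ ρ := by
  let K := {y | f y ≤ ρ ∧ f x + m * dist y x ≤ f y}
  have hK : IsCompact K := by
    refine (isCompact_closedBall x ((ρ - f x) / m)).of_isClosed_subset
      ((isClosed_le hf continuous_const).inter (isClosed_le (by fun_prop) hf)) fun y hy => ?_
    rw [mem_closedBall, le_div_iff₀' hm]
    linarith [hy.1, hy.2]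
  obtain ⟨y, ⟨hyρ, hxy⟩, hmax⟩ := hK.exists_isMaxOn ⟨x, hxρ, by simp⟩ hf.continuousOn
  refine ⟨y, hyρ.eq_of_not_lt fun hlt => ?_, hxy.trans hyρ⟩
  have hay : a < f y := by
    have hgain : 0 ≤ m * dist y x := by positivity
    linarith
  obtain ⟨y', hstep, hy'ρ⟩ :=
    ((hslope y hay hlt).and_eventually (hf.continuousAt.eventually_lt_const hlt)).exists
  have hy'K : y' ∈ K := ⟨hy'ρ.le, by
    calc f x + m * dist y' x ≤ f x + m * (dist y' y + dist y x) := by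
          gcongr
          exact dist_triangle _ _ _
      _ ≤ f y + m * dist y' y := by linarith
      _ ≤ f y' := hstep.le⟩
  have hle : f y' ≤ f y := hmax hy'K
  have hgain : 0 ≤ m * dist y' y := by positivity
  linarith

lemma exists_eq_and_add_mul_dist_le_of_mem_closure {μ : ℝ} (hf : Continuous f) (hμ : 0 < μ)
    (hslope : ∀ m < μ, ∀ y, a < f y → f y < ρ → ∃ᶠ y' in 𝓝 y, f y + m * dist y' y < f y')
    {x : α} (hx : x ∈ closure {y | a < f y}) (hxρ : f x < ρ) :
    ∃ y, f y = ρ ∧ f x + μ * dist y x ≤ ρ := by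
  let L := f ⁻¹' {ρ}
  let A := {y | f y < ρ} ∩ {y | a < f y}
  have hA : x ∈ closure A := (isOpen_lt hf continuous_const).inter_closure ⟨hxρ, hx⟩
  have hascent : ∀ y ∈ A, ∀ m ∈ Ioo 0 μ, ∃ y' ∈ L, f y + m * dist y' y ≤ ρ := fun y hy m hm =>
    exists_eq_and_add_mul_dist_le hf hm.1 (hslope m hm.2) hy.2 (le_of_lt hy.1)
  have hsub : A ×ˢ Ioo 0 μ ⊆ {p | f p.1 + p.2 * infDist p.1 L ≤ ρ} := by
    rintro ⟨y, m⟩ ⟨hy, hm⟩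
    obtain ⟨y', hy'L, hy'⟩ := hascent y hy m hm
    refine le_trans ?_ hy'
    rw [dist_comm]
    gcongr
    exacts [hm.1.le, infDist_le_dist_of_mem hy'L]
  have hlim : f x + μ * infDist x L ≤ ρ := by
    refine closure_minimal (a := (x, μ)) hsub (isClosed_le ?_ continuous_const) ?_
    · exact (hf.comp continuous_fst).add
        (continuous_snd.mul ((continuous_infDist_pt L).comp continuous_fst))
    · rw [closure_prod_eq, closure_Ioo hμ.ne]
      exact ⟨hA, right_mem_Icc.2 hμ.le⟩
  have hL : L.Nonempty := by
    obtain ⟨y, hy⟩ := closure_nonempty_iff.1 ⟨x, hA⟩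
    obtain ⟨y', hy', -⟩ := hascent y hy (μ / 2) ⟨by linarith, by linarith⟩
    exact ⟨y', hy'⟩
  obtain ⟨y, hy, hdist⟩ := ((isClosed_singleton (x := ρ)).preimage hf).exists_infDist_eq_dist hL x
  exact ⟨y, hy, by rwa [dist_comm, ← hdist]⟩

end Ascent

lemma MuReachPos.exists_infDist_eq_and_mul_dist_le {μ : ℝ} {X : Set (Euc d)}
    (hreach : MuReachPos μ X) (hμ : 0 < μ) (hX : IsClosed X) :
    ∃ s > 0, ∀ x ∈ frontier X, ∀ ρ ∈ Ioc 0 s, ∃ y, infDist y X = ρ ∧ μ * dist y x ≤ ρ := by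
  obtain ⟨s, hs, hreach⟩ := hreach
  refine ⟨s, hs, fun x hx ρ hρ => ?_⟩
  have hxX : x ∈ X := hX.frontier_subset hx
  have hx_closure : x ∈ closure {y | 0 < infDist y X} := by
    have hcompl : {y | 0 < infDist y X} = Xᶜ :=
      ext fun y => (hX.notMem_iff_infDist_pos ⟨x, hxX⟩).symm
    rw [hcompl]
    exact (frontier_eq_closure_inter_closure.subset hx).2
  have hx0 : infDist x X = 0 := infDist_zero_of_mem hxX
  simpa only [hx0, zero_add] using exists_eq_and_add_mul_dist_le_of_mem_closure
    (continuous_infDist_pt X) hμ (fun m hm y hy hyρ =>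
      frequently_infDist_add_mul_dist_lt_of_le_Delta hX ⟨x, hxX⟩ hy hμ hm
        (hreach y hy (hyρ.le.trans hρ.2)))
    hx_closure (hx0.trans_lt hρ.1)

lemma closedBall_subset_closure_compl_of_le_infDist {E : Type*} [SeminormedAddCommGroup E]
    [NormedSpace ℝ E] {X : Set E} {y : E} {r : ℝ} (hr : r ≠ 0) (hrX : r ≤ infDist y X) :
    closedBall y r ⊆ closure Xᶜ := by
  rw [← closure_ball y hr]
  exact closure_mono ((ball_subset_ball hrX).trans ball_infDist_subset_compl)

lemma exists_closedBall_subset_posTangentConeAt {E : Type*} [NormedAddCommGroup E] [NormedSpace ℝ E]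
    [ProperSpace E] {S : Set E} {x : E} {μ : ℝ}
    (hS : ∃ᶠ y in 𝓝[≠] x, closedBall y (μ * dist y x) ⊆ S) :
    ∃ u : E, ‖u‖ = 1 ∧ closedBall u μ ⊆ posTangentConeAt S x := by
  obtain ⟨y, hy_lim, hyS⟩ := exists_seq_forall_of_frequently (hS.and_eventually self_mem_nhdsWithin)
  replace hy_lim := tendsto_nhds_of_tendsto_nhdsWithin hy_lim
  obtain ⟨u, hu, φ, hφ, hφu⟩ := (isCompact_sphere (0 : E) 1).tendsto_subseq
    fun n => mem_sphere_zero_iff_norm.2 (NormedSpace.norm_normalize (sub_ne_zero.2 (hyS n).2))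
  refine ⟨u, mem_sphere_zero_iff_norm.1 hu, fun v hv => ?_⟩
  let τ : ℕ → ℝ := fun n => ‖y (φ n) - x‖
  have hτ : Tendsto τ atTop (𝓝 0) := by
    simpa using ((hy_lim.comp hφ.tendsto_atTop).sub_const x).norm
  let w : ℕ → E := fun n => NormedSpace.normalize (y (φ n) - x) + (v - u)
  have hw : Tendsto w atTop (𝓝 v) := by simpa using hφu.add_const (v - u)
  refine mem_tangentConeAt_of_seq atTop (fun n => ‖y (φ n) - x‖₊⁻¹) (fun n => τ n • w n)
    (by simpa using hτ.smul hw) (.of_forall fun n => (hyS (φ n)).1 ?_) (hw.congr fun n => ?_)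
  · rw [mem_closedBall_iff_norm] at hv ⊢
    rw [smul_add, NormedSpace.norm_smul_normalize, dist_eq_norm, ← add_assoc, add_sub_cancel,
      add_sub_cancel_left, norm_smul, norm_norm, mul_comm]
    gcongr
  · exact (inv_smul_smul₀ (norm_ne_zero_iff.2 (sub_ne_zero.2 (hyS (φ n)).2)) (w n)).symm

/-- `tangentConeAt ℝ` is closed under negation; the cone of nonnegative multiples of limit
directions is `posTangentConeAt`. -/
theorem tangentCone_compSet_contains_ball_general {μ : ℝ} (hμ : 0 < μ) {X : Set (Euc d)}
    (hX : IsClosed X) (hreach : MuReachPos μ X) {x : Euc d} (hx : x ∈ frontier X) :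
    ∃ u : Euc d, ‖u‖ = 1 ∧ closedBall u μ ⊆ posTangentConeAt (compSet X) x := by
  obtain ⟨s, hs, hascent⟩ := hreach.exists_infDist_eq_and_mul_dist_le hμ hX
  refine exists_closedBall_subset_posTangentConeAt
    ((nhdsWithin_hasBasis nhds_basis_ball _).frequently_iff.2 fun ε hε => ?_)
  have hρ_pos : 0 < min s (μ * ε / 2) := by positivity
  obtain ⟨y, hy, hyx⟩ := hascent x hx _ ⟨hρ_pos, min_le_left _ _⟩
  have hne : y ≠ x := by
    rintro rfl
    exact hρ_pos.ne (hy ▸ (infDist_zero_of_mem (hX.frontier_subset hx)).symm)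
  have hlt : dist y x < ε := by
    refine lt_of_mul_lt_mul_left (a := μ) ?_ hμ.le
    linarith [min_le_right s (μ * ε / 2), mul_pos hμ hε]
  exact ⟨y, ⟨hlt, hne⟩, closedBall_subset_closure_compl_of_le_infDist
    (mul_pos hμ (dist_pos.2 hne)).ne' (hyx.trans_eq hy.symm)⟩

/-- tangent cones of complements of complementary regular sets contain a
ball of radius `μ` centered at a unit vector. -/
theorem tangentCone_compSet_contains_ball (d : ℕ) (μ : ℝ) (hμ0 : 0 < μ) (hμ1 : μ ≤ 1)
    (X : Set (Euc d)) (hX : ComplementaryRegular X) (hreach : MuReachPos μ X) :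
    ∀ x ∈ frontier X, ∃ u : Euc d, ‖u‖ = 1 ∧
      closedBall u μ ⊆ tangentConeAt ℝ (compSet X) x := by
  intro x hx
  obtain ⟨u, hu, hball⟩ :=
    tangentCone_compSet_contains_ball_general hμ0 hX.2.1.isClosed hreach hx
  exact ⟨u, hu, hball.trans tangentConeAt_mono_field⟩
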